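/- Let q(·) ∈ C^log(Q_p^n) with q(·) ∈ P(Q_p^n), and let q'(·) be the pointwise conjugate exponent, 1/q(x) + 1/q'(x) = 1. Then there is a constant C > 0 such that for every ball B = B_γ(x) ⊆ Q_p^n, |B|_h^{−1} ‖χ_B‖_{L^{q(·)}(Q_p^n)} ‖χ_B‖_{L^{q'(·)}(Q_p^n)} ≤ C. -/

import Mathlib

open MeasureTheory ENNReal

noncomputable section

variable {p : ℕ} [Fact p.Prime] {n : ℕ}

/-- The `p`-adic ball `B_γ(x) = {y : ‖y - x‖ ≤ p^γ}` in `ℚ_p^n`. -/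
def pBall (x : Fin n → ℚ_[p]) (γ : ℤ) : Set (Fin n → ℚ_[p]) :=
  Metric.closedBall x ((p : ℝ) ^ γ)

variable [MeasurableSpace (Fin n → ℚ_[p])]

/-- The `p`-adic fractional maximal function `M_α^p f` (with values in `ℝ≥0∞`). -/
def fracMax (μ : Measure (Fin n → ℚ_[p])) (α : ℝ) (f : (Fin n → ℚ_[p]) → ℝ)
    (x : Fin n → ℚ_[p]) : ℝ≥0∞ :=
  ⨆ γ : ℤ, μ (pBall x γ) ^ (α / (n : ℝ) - 1) * ∫⁻ y in pBall x γ, (‖f y‖₊ : ℝ≥0∞) ∂μ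

/-- The fractional maximal function `M_{α,B*}^p f` restricted to a fixed ball `B*`. -/
def fracMaxOn (μ : Measure (Fin n → ℚ_[p])) (α : ℝ) (B : Set (Fin n → ℚ_[p]))
    (f : (Fin n → ℚ_[p]) → ℝ) (x : Fin n → ℚ_[p]) : ℝ≥0∞ :=
  ⨆ (γ : ℤ), ⨆ (_ : pBall x γ ⊆ B),
    μ (pBall x γ) ^ (α / (n : ℝ) - 1) * ∫⁻ y in pBall x γ, (‖f y‖₊ : ℝ≥0∞) ∂μ

/-- The maximal commutator `M_{α,b}^p f`. -/
def maxComm (μ : Measure (Fin n → ℚ_[p])) (α : ℝ) (b f : (Fin n → ℚ_[p]) → ℝ)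
    (x : Fin n → ℚ_[p]) : ℝ≥0∞ :=
  ⨆ γ : ℤ, μ (pBall x γ) ^ (α / (n : ℝ) - 1) *
    ∫⁻ y in pBall x γ, (‖b x - b y‖₊ : ℝ≥0∞) * (‖f y‖₊ : ℝ≥0∞) ∂μ

/-- The nonlinear commutator `[b, M_α^p] f = b · M_α^p f - M_α^p (b f)`. -/
def nlComm (μ : Measure (Fin n → ℚ_[p])) (α : ℝ) (b f : (Fin n → ℚ_[p]) → ℝ)
    (x : Fin n → ℚ_[p]) : ℝ :=
  b x * (fracMax μ α f x).toReal - (fracMax μ α (fun y => b y * f y) x).toReal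

/-- Membership in the `p`-adic Lipschitz space `Λ_β`. -/
def MemLipschitz (β : ℝ) (f : (Fin n → ℚ_[p]) → ℝ) : Prop :=
  ∃ C : ℝ, 0 ≤ C ∧ ∀ x y, |f x - f y| ≤ C * ‖x - y‖ ^ β

/-- The `p`-adic Lipschitz norm `‖f‖_{Λ_β}`. -/
def lipNorm (β : ℝ) (f : (Fin n → ℚ_[p]) → ℝ) : ℝ :=
  sSup {r : ℝ | ∃ x y : Fin n → ℚ_[p], x ≠ y ∧ r = |f x - f y| / ‖x - y‖ ^ β}

/-- The average `b_B` of `b` over a set `B`. -/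
def avg (μ : Measure (Fin n → ℚ_[p])) (B : Set (Fin n → ℚ_[p]))
    (b : (Fin n → ℚ_[p]) → ℝ) : ℝ :=
  (μ B).toReal⁻¹ * ∫ y in B, b y ∂μ

/-- The Luxemburg norm of an `ℝ≥0∞`-valued function. -/
def luxNormE (μ : Measure (Fin n → ℚ_[p])) (q : (Fin n → ℚ_[p]) → ℝ)
    (g : (Fin n → ℚ_[p]) → ℝ≥0∞) : ℝ≥0∞ :=
  sInf {η : ℝ≥0∞ | 0 < η ∧ η < ⊤ ∧ ∫⁻ x, (g x / η) ^ q x ∂μ ≤ 1}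

/-- The Luxemburg norm `‖f‖_{L^{q(·)}}` of a real-valued function. -/
def luxNorm (μ : Measure (Fin n → ℚ_[p])) (q : (Fin n → ℚ_[p]) → ℝ)
    (f : (Fin n → ℚ_[p]) → ℝ) : ℝ≥0∞ :=
  luxNormE μ q fun x => (‖f x‖₊ : ℝ≥0∞)

/-- The class `P(ℚ_p^n)` of variable exponents: `1 < r₋ ≤ r₊ < ∞`. -/
def IsPExp (μ : Measure (Fin n → ℚ_[p])) (r : (Fin n → ℚ_[p]) → ℝ) : Prop :=
  Measurable r ∧ (∀ x, 1 ≤ r x) ∧ 1 < essInf r μ ∧ ∃ M : ℝ, ∀ᵐ x ∂μ, r x ≤ M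

/-- The class `C^log(ℚ_p^n)` of globally log-Hölder continuous variable exponents. -/
def IsLogHolder (μ : Measure (Fin n → ℚ_[p])) (r : (Fin n → ℚ_[p]) → ℝ) : Prop :=
  Measurable r ∧ (∀ x, 1 ≤ r x) ∧
    ∃ C : ℝ, 0 ≤ C ∧
      (∀ (γ : ℤ) (x : Fin n → ℚ_[p]),
        (γ : ℝ) * (essInf r (μ.restrict (pBall x γ)) - essSup r (μ.restrict (pBall x γ))) ≤ C) ∧
      ∀ x y : Fin n → ℚ_[p], |r x - r y| ≤ C / Real.logb p ((p : ℝ) + min ‖x‖ ‖y‖)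

/-- The set of values whose supremum is the `lip_β^q` norm. -/
def lipqSet (μ : Measure (Fin n → ℚ_[p])) (β q : ℝ) (f : (Fin n → ℚ_[p]) → ℝ) : Set ℝ :=
  {r : ℝ | ∃ (x : Fin n → ℚ_[p]) (γ : ℤ),
    r = (μ (pBall x γ)).toReal ^ (-(β / (n : ℝ))) *
      ((μ (pBall x γ)).toReal⁻¹ * ∫ y in pBall x γ, |f y - avg μ (pBall x γ) f| ^ q ∂μ) ^ (1 / q)}

lemma pBall_succ (x : Fin n → ℚ_[p]) (γ : ℤ) :
    pBall x (γ + 1) = ⋃ d : Fin n → Fin p,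
      pBall (x + fun i => ((d i : ℕ) : ℚ_[p]) * (p : ℚ_[p]) ^ (-(γ + 1))) γ := by
  have hp : (1 : ℝ) < p := by exact_mod_cast (Fact.out : p.Prime).one_lt
  have hp0 : (p : ℚ_[p]) ≠ 0 := by exact_mod_cast (Fact.out : p.Prime).ne_zero
  ext y
  simp only [pBall, Metric.mem_closedBall, Set.mem_iUnion, dist_eq_norm]
  constructor
  · intro h
    have h1 : ∀ i, ‖(y i - x i) * (p : ℚ_[p]) ^ (γ + 1)‖ ≤ 1 := by
      intro i
      rw [norm_mul, Padic.norm_p_zpow, zpow_neg, ← div_eq_mul_inv, div_le_one (by positivity)]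
      exact (norm_le_pi_norm (y - x) i).trans h
    have h2 : ∀ i, ∃ d : Fin p, ‖(y i - x i) * (p : ℚ_[p]) ^ (γ + 1) - ((d : ℕ) : ℚ_[p])‖ ≤ (p : ℝ)⁻¹ := by
      intro i
      let u : ℤ_[p] := ⟨_, h1 i⟩
      refine ⟨⟨u.zmodRepr, u.zmodRepr_lt_p⟩, ?_⟩
      have := u.norm_sub_zmodRepr_lt_one
      have h3 := (Padic.norm_le_pow_iff_norm_lt_pow_add_one ((u - u.zmodRepr : ℤ_[p]) : ℚ_[p]) (-1)).2
        (by rw [PadicInt.norm_def] at this; simpa using this)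
      rw [PadicInt.coe_sub, PadicInt.coe_natCast] at h3
      simpa using h3
    choose d hd using h2
    refine ⟨d, ?_⟩
    rw [pi_norm_le_iff_of_nonneg (by positivity)]
    intro i
    have : (y - (x + fun i => ((d i : ℕ) : ℚ_[p]) * (p : ℚ_[p]) ^ (-(γ + 1)))) i
      = ((y i - x i) * (p : ℚ_[p]) ^ (γ + 1) - ((d i : ℕ) : ℚ_[p])) * (p : ℚ_[p]) ^ (-(γ + 1)) := by
      simp only [Pi.sub_apply, Pi.add_apply, zpow_neg]
      field_simp
      ring
    rw [this, norm_mul, Padic.norm_p_zpow, neg_neg]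
    calc _ ≤ (p : ℝ)⁻¹ * (p : ℝ) ^ (γ + 1) := by gcongr; exact hd i
      _ = _ := by rw [zpow_add₀ (by positivity)]; field_simp
  · rintro ⟨d, hd⟩
    rw [pi_norm_le_iff_of_nonneg (by positivity)] at hd ⊢
    intro i
    have : (y - x) i = (y - (x + fun i => ((d i : ℕ) : ℚ_[p]) * (p : ℚ_[p]) ^ (-(γ + 1)))) i
      + ((d i : ℕ) : ℚ_[p]) * (p : ℚ_[p]) ^ (-(γ + 1)) := by
      simp only [Pi.sub_apply, Pi.add_apply]
      ring
    rw [this]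
    refine (Padic.nonarchimedean _ _).trans (max_le ((hd i).trans ?_) ?_)
    · exact zpow_le_zpow_right₀ hp.le (by lia)
    · rw [norm_mul, Padic.norm_p_zpow, neg_neg]
      have := Padic.norm_int_le_one (p := p) (d i : ℕ)
      push_cast at this
      exact mul_le_of_le_one_left (by positivity) this

lemma pBall_disj (x : Fin n → ℚ_[p]) (γ : ℤ) :
    Pairwise (Function.onFun Disjoint fun d : Fin n → Fin p =>
      pBall (x + fun i => ((d i : ℕ) : ℚ_[p]) * (p : ℚ_[p]) ^ (-(γ + 1))) γ) := by
  have hp : (1 : ℝ) < p := by exact_mod_cast (Fact.out : p.Prime).one_lt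
  have hp0 : (p : ℚ_[p]) ≠ 0 := by exact_mod_cast (Fact.out : p.Prime).ne_zero
  intro d e hde
  rw [Function.onFun, Set.disjoint_left]
  intro y h1 h2
  apply hde
  simp only [pBall, Metric.mem_closedBall, dist_eq_norm] at h1 h2
  rw [pi_norm_le_iff_of_nonneg (by positivity)] at h1 h2
  ext i
  have h : ‖(((d i : ℕ) - (e i : ℕ) : ℤ) : ℚ_[p]) * (p : ℚ_[p]) ^ (-(γ + 1))‖ ≤ (p : ℝ) ^ γ := by
    have : (((d i : ℕ) - (e i : ℕ) : ℤ) : ℚ_[p]) * (p : ℚ_[p]) ^ (-(γ + 1)) =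
       (y - (x + fun i => ((e i : ℕ) : ℚ_[p]) * (p : ℚ_[p]) ^ (-(γ + 1)))) i +
       - (y - (x + fun i => ((d i : ℕ) : ℚ_[p]) * (p : ℚ_[p]) ^ (-(γ + 1)))) i := by
      simp only [Pi.sub_apply, Pi.add_apply]
      push_cast
      ring
    rw [this]
    refine (Padic.nonarchimedean _ _).trans (max_le (h2 i) ?_)
    rw [norm_neg]; exact h1 i
  rw [norm_mul, Padic.norm_p_zpow, neg_neg, zpow_add_one₀ (by positivity)] at h
  have h3 : ‖(((d i : ℕ) - (e i : ℕ) : ℤ) : ℚ_[p])‖ < 1 := by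
    by_contra hc
    push Not at hc
    have hpos : (0 : ℝ) < (p : ℝ) ^ γ := by positivity
    nlinarith [mul_le_mul_of_nonneg_right hc (mul_pos hpos (zero_lt_one.trans hp)).le]
  rw [Padic.norm_intCast_lt_one_iff] at h3
  have h4 := Int.eq_zero_of_abs_lt_dvd h3 (by
    rw [abs_lt]; constructor <;> have := (d i).2 <;> have := (e i).2 <;> omega)
  lia

lemma measurableSet_pBall [BorelSpace (Fin n → ℚ_[p])] (x : Fin n → ℚ_[p]) (γ : ℤ) :
    MeasurableSet (pBall x γ) := Metric.isClosed_closedBall.measurableSet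

lemma measure_pBall_zero [BorelSpace (Fin n → ℚ_[p])]
    (μ : Measure (Fin n → ℚ_[p])) [μ.IsAddHaarMeasure] (x : Fin n → ℚ_[p]) (γ : ℤ) :
    μ (pBall x γ) = μ (pBall 0 γ) := by
  have : pBall x γ = (fun y => (-x) + y) ⁻¹' (pBall 0 γ) := by
    ext y
    simp [pBall, dist_eq_norm, sub_eq_neg_add]
  rw [this, measure_preimage_add]

lemma measure_pBall_succ [BorelSpace (Fin n → ℚ_[p])]
    (μ : Measure (Fin n → ℚ_[p])) [μ.IsAddHaarMeasure] (γ : ℤ) :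
    μ (pBall 0 (γ + 1)) = (p : ℝ≥0∞) ^ n * μ (pBall 0 γ) := by
  rw [pBall_succ, measure_iUnion (pBall_disj _ _) (fun d => measurableSet_pBall _ _)]
  simp_rw [measure_pBall_zero μ (_ + _)]
  simp

lemma measure_pBall [BorelSpace (Fin n → ℚ_[p])]
    (μ : Measure (Fin n → ℚ_[p])) [μ.IsAddHaarMeasure]
    (hμ : μ (Metric.closedBall 0 1) = 1) (x : Fin n → ℚ_[p]) (γ : ℤ) :
    μ (pBall x γ) = ENNReal.ofReal ((p : ℝ) ^ ((n : ℝ) * γ)) := by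
  have hp : (1 : ℝ) < p := by exact_mod_cast (Fact.out : p.Prime).one_lt
  have hpp : (0 : ℝ) < p := by positivity
  have hpn : (p : ℝ≥0∞) ^ n = ENNReal.ofReal ((p : ℝ) ^ (n : ℝ)) := by
    rw [Real.rpow_natCast, ENNReal.ofReal_pow hpp.le, ENNReal.ofReal_natCast]
  rw [measure_pBall_zero]
  induction γ using Int.induction_on with
  | zero => simpa [pBall] using hμ
  | succ k ih =>
    rw [measure_pBall_succ, ih, hpn, ← ENNReal.ofReal_mul (by positivity), ← Real.rpow_add hpp]
    congr 2; push_cast; ring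
  | pred k ih =>
    have h := measure_pBall_succ μ (-(k : ℤ) - 1)
    rw [sub_add_cancel, ih, hpn] at h
    have h0 : ENNReal.ofReal ((p : ℝ) ^ (n : ℝ)) ≠ 0 := by
      exact ne_of_gt (ENNReal.ofReal_pos.2 (by positivity))
    rw [← ENNReal.mul_right_inj h0 ENNReal.ofReal_ne_top, ← h, ← ENNReal.ofReal_mul (by positivity),
      ← Real.rpow_add hpp]
    congr 2; push_cast; ring

lemma luxNorm_ind_le (μ : Measure (Fin n → ℚ_[p])) (B : Set (Fin n → ℚ_[p]))
    (hB : MeasurableSet B) (s : (Fin n → ℚ_[p]) → ℝ) (hs : ∀ᵐ x ∂μ, 0 < s x) (η : ℝ) (hη : 0 < η)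
    (G : (Fin n → ℚ_[p]) → ℝ≥0∞)
    (hG : ∀ᵐ x ∂μ, x ∈ B → ENNReal.ofReal (η ^ (-s x)) ≤ G x)
    (hint : ∫⁻ x in B, G x ∂μ ≤ 1) :
    luxNorm μ s (Set.indicator B (fun _ => (1 : ℝ))) ≤ ENNReal.ofReal η := by
  refine sInf_le ⟨by simpa using hη, ENNReal.ofReal_lt_top, le_trans ?_ hint⟩
  rw [← lintegral_indicator hB]
  refine lintegral_mono_ae ?_
  filter_upwards [hs, hG] with x h1 h2
  by_cases hx : x ∈ B
  · simp only [hx, Set.indicator_of_mem]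
    refine le_trans (le_of_eq ?_) (h2 hx)
    rw [Real.rpow_neg hη.le, ENNReal.ofReal_inv_of_pos (by positivity),
      ← ENNReal.ofReal_rpow_of_pos hη, ← ENNReal.inv_rpow]
    simp
  · simp [hx, h1]

lemma luxNorm_small [BorelSpace (Fin n → ℚ_[p])]
    (μ : Measure (Fin n → ℚ_[p])) [μ.IsAddHaarMeasure]
    (hμ : μ (Metric.closedBall 0 1) = 1) (γ : ℤ) (hγ : γ ≤ 0) (x : Fin n → ℚ_[p])
    (s : (Fin n → ℚ_[p]) → ℝ) (hs : ∀ᵐ x ∂μ, 0 < s x) (S : ℝ) (hS0 : 0 < S)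
    (hS : ∀ᵐ y ∂μ, y ∈ pBall x γ → s y ≤ S) :
    luxNorm μ s (Set.indicator (pBall x γ) (fun _ => (1 : ℝ))) ≤
      ENNReal.ofReal ((p : ℝ) ^ ((n : ℝ) * γ / S)) := by
  have hp : (1 : ℝ) < p := by exact_mod_cast (Fact.out : p.Prime).one_lt
  have hpp : (0 : ℝ) < p := by positivity
  have hγ' : (γ : ℝ) ≤ 0 := by exact_mod_cast hγ
  refine luxNorm_ind_le μ _ (measurableSet_pBall x γ) s hs _ (by positivity)
    (fun _ => ENNReal.ofReal ((p : ℝ) ^ (-((n : ℝ) * γ)))) ?_ ?_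
  · filter_upwards [hs, hS] with y h1 h2 hy
    apply ENNReal.ofReal_le_ofReal
    rw [← Real.rpow_mul hpp.le]
    apply Real.rpow_le_rpow_of_exponent_le hp.le
    have h3 : s y / S ≤ 1 := (div_le_one hS0).2 (h2 hy)
    have h4 : (n : ℝ) * γ ≤ 0 := mul_nonpos_of_nonneg_of_nonpos (by positivity) hγ'
    have : (n : ℝ) * γ / S * -s y = - (n * γ) * (s y / S) := by ring
    rw [this]
    exact mul_le_of_le_one_right (by linarith) h3
  · rw [setLIntegral_const, measure_pBall μ hμ, ← ENNReal.ofReal_mul (by positivity),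
      ← Real.rpow_add hpp]
    simp

lemma luxNorm_large [BorelSpace (Fin n → ℚ_[p])]
    (μ : Measure (Fin n → ℚ_[p])) [μ.IsAddHaarMeasure]
    (hμ : μ (Metric.closedBall 0 1) = 1) (γ : ℤ) (hγ : 0 ≤ γ) (x : Fin n → ℚ_[p])
    (s : (Fin n → ℚ_[p]) → ℝ) (hs : ∀ᵐ x ∂μ, 1 ≤ s x) (s0 Q D : ℝ) (h1s : 1 ≤ s0) (hsQ : s0 ≤ Q)
    (m : ℤ) (hm : (m : ℝ) ≤ γ / Q) (hD0 : 0 ≤ D)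
    (hD : ∀ᵐ y ∂μ, y ∉ pBall 0 m → |s y - s0| * γ ≤ D) :
    luxNorm μ s (Set.indicator (pBall x γ) (fun _ => (1 : ℝ))) ≤
      ENNReal.ofReal ((1 + (p : ℝ) ^ ((n : ℝ) * D)) * (p : ℝ) ^ ((n : ℝ) * γ / s0)) := by
  have hp : (1 : ℝ) < p := by exact_mod_cast (Fact.out : p.Prime).one_lt
  have hpp : (0 : ℝ) < p := by positivity
  have hγ' : (0 : ℝ) ≤ γ := by exact_mod_cast hγ
  have hs0 : 0 < s0 := by linarith
  have hQ0 : 0 < Q := by linarith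
  have hng : 0 ≤ (n : ℝ) * γ := by positivity
  set K : ℝ := 1 + (p : ℝ) ^ ((n : ℝ) * D) with hK
  have hK1 : 1 ≤ K := by rw [hK]; have : 0 < (p : ℝ) ^ ((n : ℝ) * D) := by positivity
                         linarith
  have hK0 : 0 < K := by linarith
  refine luxNorm_ind_le μ _ (measurableSet_pBall x γ) s (hs.mono fun y hy => by linarith) _
    (by positivity)
    (fun y => ENNReal.ofReal K⁻¹ * ((pBall 0 m).indicator
      (fun _ => ENNReal.ofReal ((p : ℝ) ^ (-((n : ℝ) * γ / Q)))) y
      + ENNReal.ofReal ((p : ℝ) ^ (-((n : ℝ) * γ) + n * D)))) ?_ ?_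
  · filter_upwards [hs, hD] with y h1 h2 hy
    have e1 : (K * (p : ℝ) ^ ((n : ℝ) * γ / s0)) ^ (-s y) ≤
        K⁻¹ * (p : ℝ) ^ (-((n : ℝ) * γ) * (s y / s0)) := by
      rw [Real.mul_rpow hK0.le (by positivity), ← Real.rpow_mul hpp.le]
      have : K ^ (-s y) ≤ K⁻¹ := by
        rw [← Real.rpow_neg_one]
        exact Real.rpow_le_rpow_of_exponent_le hK1 (by linarith)
      have e : (n : ℝ) * γ / s0 * -s y = -((n : ℝ) * γ) * (s y / s0) := by ring
      rw [e]
      gcongr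
    refine (ENNReal.ofReal_le_ofReal e1).trans ?_
    rw [ENNReal.ofReal_mul (by positivity)]
    gcongr
    by_cases hym : y ∈ pBall 0 m
    · refine le_add_right ?_
      rw [Set.indicator_of_mem hym]
      apply ENNReal.ofReal_le_ofReal
      apply Real.rpow_le_rpow_of_exponent_le hp.le
      have : Q⁻¹ ≤ s y / s0 := by
        rw [inv_eq_one_div, div_le_div_iff₀ hQ0 hs0]
        nlinarith
      have := mul_le_mul_of_nonneg_left this hng
      rw [div_eq_mul_inv _ Q, neg_mul]
      linarith
    · refine le_add_left ?_
      apply ENNReal.ofReal_le_ofReal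
      apply Real.rpow_le_rpow_of_exponent_le hp.le
      have h3 := h2 hym
      have e : -((n : ℝ) * γ) * (s y / s0) = -((n : ℝ) * γ) + n * ((γ * (s0 - s y)) / s0) := by
        field_simp
        ring
      rw [e]
      gcongr
      rw [div_le_iff₀ hs0]
      have h4 : s0 - s y ≤ |s y - s0| := by rw [abs_sub_comm]; exact le_abs_self _
      nlinarith
  · rw [lintegral_const_mul _ (by
      exact (measurable_const.indicator (measurableSet_pBall 0 m)).add measurable_const),
      lintegral_add_right _ measurable_const, setLIntegral_const, measure_pBall μ hμ,
      ← ENNReal.ofReal_mul (by positivity), ← Real.rpow_add hpp]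
    have e1 : ∫⁻ y in pBall x γ, (pBall 0 m).indicator
      (fun _ => ENNReal.ofReal ((p : ℝ) ^ (-((n : ℝ) * γ / Q)))) y ∂μ ≤ ENNReal.ofReal 1 := by
      refine (setLIntegral_le_lintegral _ _).trans ?_
      rw [lintegral_indicator (measurableSet_pBall 0 m), setLIntegral_const, measure_pBall μ hμ,
        ← ENNReal.ofReal_mul (by positivity), ← Real.rpow_add hpp]
      apply ENNReal.ofReal_le_ofReal
      apply Real.rpow_le_one_of_one_le_of_nonpos hp.le
      have := mul_le_mul_of_nonneg_left hm (Nat.cast_nonneg (α := ℝ) n)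
      rw [mul_div_assoc]
      linarith
    refine (mul_le_mul_right (add_le_add_left e1 _) _).trans ?_
    rw [← ENNReal.ofReal_add (by positivity) (by positivity), ← ENNReal.ofReal_mul (by positivity)]
    have : -((n : ℝ) * γ) + n * D + n * γ = n * D := by ring
    rw [this, ← hK, inv_mul_cancel₀ hK0.ne']
    simp

lemma conj_eq {q q' : ℝ} (hq : 1 < q) (h : 1 / q + 1 / q' = 1) : q' = q / (q - 1) := by
  have h0 : q' ≠ 0 := by
    rintro rfl
    have : 1 / q < 1 := by rw [div_lt_one (by linarith)]; exact hq
    simp at h this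
    linarith
  have : q ≠ 0 := by linarith
  have h1 : q - 1 ≠ 0 := by linarith
  field_simp at h ⊢
  linarith

lemma conj_le {q J : ℝ} (hJ : 1 < J) (h : J ≤ q) : q / (q - 1) ≤ J / (J - 1) := by
  rw [div_le_div_iff₀ (by linarith) (by linarith)]
  nlinarith

lemma conj_diff {q r a : ℝ} (ha : 1 < a) (hq : a ≤ q) (hr : a ≤ r) :
    |q / (q - 1) - r / (r - 1)| ≤ |q - r| / (a - 1) ^ 2 := by
  have h1 : 0 < a - 1 := by linarith
  have h2 : 0 < q - 1 := by linarith
  have h3 : 0 < r - 1 := by linarith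
  have : q / (q - 1) - r / (r - 1) = (r - q) / ((q - 1) * (r - 1)) := by
    field_simp
    ring
  rw [this, abs_div, abs_sub_comm r q, abs_of_pos (mul_pos h2 h3)]
  gcongr
  nlinarith

lemma exists_far (hn : 0 < n) [BorelSpace (Fin n → ℚ_[p])]
    (μ : Measure (Fin n → ℚ_[p])) [μ.IsAddHaarMeasure] (P : (Fin n → ℚ_[p]) → Prop)
    (hP : ∀ᵐ x ∂μ, P x) (γ : ℤ) : ∃ z, P z ∧ (p : ℝ) ^ γ < ‖z‖ := by
  have hp : (1 : ℝ) < p := by exact_mod_cast (Fact.out : p.Prime).one_lt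
  have hd := Measure.dense_of_ae hP
  have ho : IsOpen {z : Fin n → ℚ_[p] | (p : ℝ) ^ γ < ‖z‖} :=
    isOpen_lt continuous_const continuous_norm
  obtain ⟨z, hz1, hz2⟩ := hd.inter_open_nonempty _ ho ⟨fun _ => (p : ℚ_[p]) ^ (-(γ + 1)), by
    haveI : Nonempty (Fin n) := ⟨⟨0, hn⟩⟩
    rw [Set.mem_setOf_eq, pi_norm_const, Padic.norm_p_zpow, neg_neg]
    exact zpow_lt_zpow_right₀ hp (by lia)⟩
  exact ⟨z, hz2, hz1⟩

lemma main_small [BorelSpace (Fin n → ℚ_[p])]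
    (μ : Measure (Fin n → ℚ_[p])) [μ.IsAddHaarMeasure]
    (hμ : μ (Metric.closedBall 0 1) = 1)
    (q q' : (Fin n → ℚ_[p]) → ℝ) (a M C : ℝ) (ha : 1 < a) (hC : 0 ≤ C)
    (hqa : ∀ᵐ x ∂μ, a ≤ q x) (hqM : ∀ᵐ x ∂μ, q x ≤ M)
    (hq' : ∀ᵐ x ∂μ, q' x = q x / (q x - 1)) (γ : ℤ) (hγ : γ ≤ 0) (x : Fin n → ℚ_[p])
    (hlog : (γ : ℝ) * (essInf q (μ.restrict (pBall x γ)) - essSup q (μ.restrict (pBall x γ))) ≤ C) :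
      (μ (pBall x γ))⁻¹ *
        luxNorm μ q (Set.indicator (pBall x γ) (fun _ => (1 : ℝ))) *
        luxNorm μ q' (Set.indicator (pBall x γ) (fun _ => (1 : ℝ))) ≤
          ENNReal.ofReal ((p : ℝ) ^ ((n : ℝ) * C)) := by
  have hp : (1 : ℝ) < p := by exact_mod_cast (Fact.out : p.Prime).one_lt
  have hpp : (0 : ℝ) < p := by positivity
  have hγ' : (γ : ℝ) ≤ 0 := by exact_mod_cast hγ
  have hm := measurableSet_pBall x γ
  set I := essInf q (μ.restrict (pBall x γ)) with hI
  set S := essSup q (μ.restrict (pBall x γ)) with hS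
  have b1 : ∀ᵐ y ∂(μ.restrict (pBall x γ)), I ≤ q y :=
    ae_essInf_le ⟨a, ae_restrict_of_ae hqa⟩
  have b2 : ∀ᵐ y ∂(μ.restrict (pBall x γ)), q y ≤ S :=
    ae_le_essSup ⟨M, ae_restrict_of_ae hqM⟩
  set J := max I a with hJ
  have b3 : ∀ᵐ y ∂(μ.restrict (pBall x γ)), J ≤ q y := by
    filter_upwards [b1, ae_restrict_of_ae hqa] with y h1 h2 using max_le h1 h2
  have hJ1 : 1 < J := lt_of_lt_of_le ha (le_max_right _ _)
  have hpos : μ (pBall x γ) ≠ 0 := by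
    rw [measure_pBall μ hμ]
    exact ne_of_gt (ENNReal.ofReal_pos.2 (by positivity))
  have hJS : J ≤ S := by
    haveI : (ae (μ.restrict (pBall x γ))).NeBot := by
      rw [ae_neBot]
      intro h
      exact hpos (Measure.restrict_eq_zero.1 h)
    obtain ⟨y, h1, h2⟩ := (b3.and b2).exists
    exact h1.trans h2
  have hS0 : 0 < S := by linarith
  have hJ0 : 0 < J := by linarith
  rw [ae_restrict_iff' hm] at b2 b3
  have n1 := luxNorm_small μ hμ γ hγ x q (hqa.mono fun y hy => by linarith) S hS0 b2
  have n2 := luxNorm_small μ hμ γ hγ x q' (by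
      filter_upwards [hqa, hq'] with y h1 h2
      rw [h2]
      exact div_pos (by linarith) (by linarith)) (J / (J - 1)) (div_pos hJ0 (by linarith)) (by
      filter_upwards [b3, hq'] with y h1 h2 hy
      rw [h2]
      exact conj_le hJ1 (h1 hy))
  refine (mul_le_mul' (mul_le_mul_right n1 _) n2).trans ?_
  rw [measure_pBall μ hμ, ← ENNReal.ofReal_inv_of_pos (by positivity), ← Real.rpow_neg hpp.le,
    ← ENNReal.ofReal_mul (by positivity), ← ENNReal.ofReal_mul (by positivity),
    ← Real.rpow_add hpp, ← Real.rpow_add hpp]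
  apply ENNReal.ofReal_le_ofReal
  apply Real.rpow_le_rpow_of_exponent_le hp.le
  have hJ1' : J - 1 ≠ 0 := by linarith
  have e : -((n : ℝ) * γ) + n * γ / S + n * γ / (J / (J - 1)) = n * (γ * (J - S) / (S * J)) := by
    field_simp
    ring
  rw [e]
  gcongr
  rw [div_le_iff₀ (by positivity)]
  have h1 : (γ : ℝ) * (J - S) ≤ γ * (I - S) :=
    mul_le_mul_of_nonpos_left (by linarith [le_max_left I a]) hγ'
  have h2 : 1 ≤ S * J := by nlinarith
  nlinarith

lemma main_large (hn : 0 < n) [BorelSpace (Fin n → ℚ_[p])]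
    (μ : Measure (Fin n → ℚ_[p])) [μ.IsAddHaarMeasure]
    (hμ : μ (Metric.closedBall 0 1) = 1)
    (q q' : (Fin n → ℚ_[p]) → ℝ) (a M C Q : ℝ) (ha : 1 < a) (hC : 0 ≤ C)
    (hqa : ∀ᵐ x ∂μ, a ≤ q x) (hqM : ∀ᵐ x ∂μ, q x ≤ M)
    (hq' : ∀ᵐ x ∂μ, q' x = q x / (q x - 1))
    (hlog : ∀ x y : Fin n → ℚ_[p], |q x - q y| ≤ C / Real.logb p ((p : ℝ) + min ‖x‖ ‖y‖))
    (hQ1 : M ≤ Q) (hQ2 : a / (a - 1) ≤ Q)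
    (γ : ℤ) (hγ : 0 ≤ γ) (x : Fin n → ℚ_[p]) :
      (μ (pBall x γ))⁻¹ *
        luxNorm μ q (Set.indicator (pBall x γ) (fun _ => (1 : ℝ))) *
        luxNorm μ q' (Set.indicator (pBall x γ) (fun _ => (1 : ℝ))) ≤
          ENNReal.ofReal ((1 + (p : ℝ) ^ ((n : ℝ) * (C * (2 * Q)))) *
            (1 + (p : ℝ) ^ ((n : ℝ) * (C * (2 * Q) / (a - 1) ^ 2)))) := by
  have hp : (1 : ℝ) < p := by exact_mod_cast (Fact.out : p.Prime).one_lt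
  have hpp : (0 : ℝ) < p := by positivity
  have hγ' : (0 : ℝ) ≤ γ := by exact_mod_cast hγ
  obtain ⟨z, ⟨hz1, hz2⟩, hz⟩ := exists_far hn μ _ (hqa.and hqM) γ
  have ha1 : 0 < a - 1 := by linarith
  have hz0 : 0 < q z - 1 := by linarith
  have hQ : 1 ≤ Q := by linarith
  have hQ0 : 0 < Q := by linarith
  set m : ℤ := ⌊(γ : ℝ) / Q⌋ with hm
  have hm1 : (m : ℝ) ≤ γ / Q := Int.floor_le _
  have hm2 : (γ : ℝ) / Q < m + 1 := Int.lt_floor_add_one _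
  have hmγ : m ≤ γ := by
    have : (m : ℝ) ≤ γ := hm1.trans (div_le_self hγ' hQ)
    exact_mod_cast this
  have hD : ∀ y, y ∉ pBall (0 : Fin n → ℚ_[p]) m → |q y - q z| * γ ≤ C * (2 * Q) := by
    intro y hy
    simp only [pBall, Metric.mem_closedBall, dist_zero_right, not_le] at hy
    have hmin : (p : ℝ) ^ m < min ‖y‖ ‖z‖ :=
      lt_min hy ((zpow_le_zpow_right₀ hp.le hmγ).trans_lt hz)
    have hminpos : 0 < min ‖y‖ ‖z‖ := lt_trans (by positivity) hmin
    set L := Real.logb p ((p : ℝ) + min ‖y‖ ‖z‖) with hL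
    have l1 : 1 ≤ L := by
      rw [hL, Real.le_logb_iff_rpow_le hp (by positivity), Real.rpow_one]
      linarith
    have l2 : (m : ℝ) ≤ L := by
      rw [hL, Real.le_logb_iff_rpow_le hp (by positivity), Real.rpow_intCast]
      linarith
    have l3 : (γ : ℝ) ≤ 2 * Q * L := by
      rw [div_lt_iff₀ hQ0] at hm2
      nlinarith
    have hL0 : 0 < L := by linarith
    calc |q y - q z| * γ ≤ C / L * (2 * Q * L) :=
          mul_le_mul (hlog y z) l3 hγ' (by positivity)
      _ = _ := by field_simp
  have n1 := luxNorm_large μ hμ γ hγ x q (hqa.mono fun y hy => by linarith) (q z) Q (C * (2 * Q))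
    (by linarith) (by linarith) m hm1 (by positivity) (Filter.Eventually.of_forall hD)
  have n2 := luxNorm_large μ hμ γ hγ x q' (by
      filter_upwards [hqa, hq'] with y h1 h2
      rw [h2, one_le_div (by linarith)]
      linarith) (q z / (q z - 1)) Q (C * (2 * Q) / (a - 1) ^ 2)
    (by rw [one_le_div hz0]; linarith) ((conj_le ha hz1).trans hQ2) m hm1 (by positivity) (by
      filter_upwards [hqa, hq'] with y h1 h2 hy
      rw [h2]
      calc _ ≤ |q y - q z| / (a - 1) ^ 2 * γ := by
            gcongr
            exact conj_diff ha h1 hz1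
        _ = |q y - q z| * γ / (a - 1) ^ 2 := by ring
        _ ≤ _ := by
            exact div_le_div_of_nonneg_right (hD y hy) (by positivity))
  refine (mul_le_mul' (mul_le_mul_right n1 _) n2).trans (le_of_eq ?_)
  rw [measure_pBall μ hμ, ← ENNReal.ofReal_inv_of_pos (by positivity), ← Real.rpow_neg hpp.le,
    ← ENNReal.ofReal_mul (by positivity), ← ENNReal.ofReal_mul (by positivity)]
  congr 1
  have hz00 : q z ≠ 0 := by linarith
  have e : (p : ℝ) ^ (-((n : ℝ) * γ)) * (p : ℝ) ^ ((n : ℝ) * γ / q z) *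
      (p : ℝ) ^ ((n : ℝ) * γ / (q z / (q z - 1))) = 1 := by
    rw [← Real.rpow_add hpp, ← Real.rpow_add hpp]
    have : -((n : ℝ) * γ) + n * γ / q z + n * γ / (q z / (q z - 1)) = 0 := by
      field_simp
      ring
    rw [this, Real.rpow_zero]
  linear_combination ((1 + (p : ℝ) ^ ((n : ℝ) * (C * (2 * Q)))) *
            (1 + (p : ℝ) ^ ((n : ℝ) * (C * (2 * Q) / (a - 1) ^ 2)))) * e

theorem luxNorm_indicator_mul_conjugate_le
    (hn : 0 < n) [BorelSpace (Fin n → ℚ_[p])]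
    (μ : Measure (Fin n → ℚ_[p])) [μ.IsAddHaarMeasure]
    (hμ : μ (Metric.closedBall 0 1) = 1)
    (q q' : (Fin n → ℚ_[p]) → ℝ) (hqlog : IsLogHolder μ q) (hqP : IsPExp μ q)
    (hq' : ∀ x, 1 / q x + 1 / q' x = 1) :
    ∃ C : ℝ, 0 < C ∧ ∀ (γ : ℤ) (x : (Fin n → ℚ_[p])),
      (μ (pBall x γ))⁻¹ *
        luxNorm μ q (Set.indicator (pBall x γ) (fun _ => (1 : ℝ))) *
        luxNorm μ q' (Set.indicator (pBall x γ) (fun _ => (1 : ℝ))) ≤ ENNReal.ofReal C := by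
  have hpp : (0 : ℝ) < p := by exact_mod_cast (Fact.out : p.Prime).pos
  obtain ⟨-, h1, ha, M, hqM⟩ := hqP
  obtain ⟨-, -, C, hC, hloc, hlog⟩ := hqlog
  have hqa : ∀ᵐ x ∂μ, essInf q μ ≤ q x := by
    have h2 : ∀ᵐ x ∂μ, 1 ≤ q x := Filter.Eventually.of_forall h1
    exact ae_essInf_le ⟨1, h2⟩
  have hc : ∀ᵐ x ∂μ, q' x = q x / (q x - 1) := by
    filter_upwards [hqa] with y hy
    exact conj_eq (by linarith) (hq' y)
  set a := essInf q μ
  set Q := max M (a / (a - 1))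
  set C1 := (p : ℝ) ^ ((n : ℝ) * C)
  set C2 := (1 + (p : ℝ) ^ ((n : ℝ) * (C * (2 * Q)))) *
            (1 + (p : ℝ) ^ ((n : ℝ) * (C * (2 * Q) / (a - 1) ^ 2)))
  have hC1 : 0 < C1 := by positivity
  have hC2 : 0 < C2 := by positivity
  refine ⟨C1 + C2, by positivity, fun γ x => ?_⟩
  rcases le_total γ 0 with hγ | hγ
  · exact (main_small μ hμ q q' a M C ha hC hqa hqM hc γ hγ x (hloc γ x)).trans
      (ENNReal.ofReal_le_ofReal (by linarith))
  · exact (main_large hn μ hμ q q' a M C Q ha hC hqa hqM hc hlog (le_max_left _ _)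
      (le_max_right _ _) γ hγ x).trans (ENNReal.ofReal_le_ofReal (by linarith))

end
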